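/- arXiv:2112.14291 — 2 statements merged into one kernel-verified Lean document; each statement's English description precedes it below -/
import Mathlib

section
/- Let F₁ be an n×k₁ real matrix and F₂ an n×k₂ real matrix with C = F₁·F₁ᵀ = F₂·F₂ᵀ, and let s ≤ min(k₁, k₂). Then the set of objective values attained by DFact-feasible tuples for (C, s, A, b; F₁) equals the set of objective values attained by DFact-feasible tuples for (C, s, A, b; F₂); in particular, the factorization bound (the infimum of the objective over DFact-feasible tuples) is independent of the particular factorization of C. -/
open Matrix

/-- The eigenvalues of a real symmetric matrix, sorted in nonincreasing order:
`sortedEigs M 0` is the largest eigenvalue (`λ_1`) and `sortedEigs M (k-1)` the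
smallest (`λ_k`).  For non-Hermitian matrices we return the junk value `0`. -/
noncomputable def sortedEigs {k : ℕ} (M : Matrix (Fin k) (Fin k) ℝ) : Fin k → ℝ :=
  if h : M.IsHermitian then fun i => (h.eigenvalues ∘ Tuple.sort h.eigenvalues) i.rev
  else fun _ => 0

/-- DFact-feasibility of the tuple `(Θ, υ, ν, π, τ)` for the data `(A; F)`:
`Θ ≻ 0`, `υ, ν, π ≥ 0` and `diag(FΘFᵀ) + υ − ν − Aᵀπ − τ𝟙 = 0`. -/
def DFactFeasible {n m k : ℕ} (A : Matrix (Fin m) (Fin n) ℝ) (F : Matrix (Fin n) (Fin k) ℝ)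
    (Θ : Matrix (Fin k) (Fin k) ℝ) (υ ν : Fin n → ℝ) (π : Fin m → ℝ) (τ : ℝ) : Prop :=
  Θ.PosDef ∧ (∀ j, 0 ≤ υ j) ∧ (∀ j, 0 ≤ ν j) ∧ (∀ i, 0 ≤ π i) ∧
    ∀ j, (F * Θ * Fᵀ) j j + υ j - ν j - (∑ i, A i j * π i) - τ = 0

/-- The DFact objective value
`f(Θ, ν, π, τ) = −Σ_{ℓ=k−s+1}^{k} log λ_ℓ(Θ) + νᵀ𝟙 + πᵀb + τ·s − s`. -/
noncomputable def DFactObj {n m k : ℕ} (s : ℕ) (b : Fin m → ℝ)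
    (Θ : Matrix (Fin k) (Fin k) ℝ) (ν : Fin n → ℝ) (π : Fin m → ℝ) (τ : ℝ) : ℝ :=
  -(∑ i : Fin k, if k - s ≤ (i : ℕ) then Real.log (sortedEigs Θ i) else 0)
    + (∑ j, ν j) + (∑ i, π i * b i) + τ * s - s

/-! Since `F₁ F₁ᵀ = F₂ F₂ᵀ`, Douglas' factorization yields a contraction `W` with `W F₂ᵀ = F₁ᵀ`.
Given `Θ ≻ 0`, the matrix `N = Wᵀ Θ W + c (1 - Wᵀ W)` is positive definite for every `c > 0` and
satisfies `F₂ N F₂ᵀ = F₁ Θ F₁ᵀ`, because `F₂ (1 - Wᵀ W) F₂ᵀ = F₂ F₂ᵀ - F₁ F₁ᵀ = 0`. If `c` bounds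
the spectrum of `Θ`, then, counting from the bottom of the spectrum, the eigenvalues of `N`
dominate those of `Θ`; thus replacing `Θ` by `N` does not increase the objective. Finally, raising
one coordinate of `υ` and of `ν` by the same amount preserves feasibility and raises the objective
by that amount, so every value attained for `F₁` is attained for `F₂`. -/

section SymmetricOperators

open Module RCLike
open scoped InnerProductSpace

variable {𝕜 E F : Type*} [RCLike 𝕜]
  [NormedAddCommGroup E] [InnerProductSpace 𝕜 E] [FiniteDimensional 𝕜 E]
  [NormedAddCommGroup F] [InnerProductSpace 𝕜 F] [FiniteDimensional 𝕜 F]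
  {k l : ℕ} {T : E →ₗ[𝕜] E} {S : F →ₗ[𝕜] F}

lemma eigenvalues_eq_eigenvalues_cast (hT : T.IsSymmetric) (hk : finrank 𝕜 E = k)
    (hl : finrank 𝕜 E = l) (i : Fin k) :
    hT.eigenvalues hk i = hT.eigenvalues hl (i.cast (hk.symm.trans hl)) := by
  subst hk hl
  rfl

lemma re_inner_map_self_eq_sum_eigenvalues (hT : T.IsSymmetric) (hk : finrank 𝕜 E = k) (x : E) :
    re ⟪x, T x⟫_𝕜 =
      ∑ i, hT.eigenvalues hk i * ‖⟪hT.eigenvectorBasis hk i, x⟫_𝕜‖ ^ 2 := by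
  rw [← (hT.eigenvectorBasis hk).sum_inner_mul_inner, map_sum]
  refine Finset.sum_congr rfl fun i _ => ?_
  rw [← hT, hT.apply_eigenvectorBasis, inner_smul_left, conj_ofReal, mul_left_comm,
    re_ofReal_mul, inner_mul_symm_re_eq_norm, norm_mul, norm_inner_symm x, sq]

lemma eigenvalues_mul_sq_norm_le_re_inner (hT : T.IsSymmetric) (hk : finrank 𝕜 E = k)
    {i : Fin k} {x : E} (hx : ∀ p, i < p → ⟪hT.eigenvectorBasis hk p, x⟫_𝕜 = 0) :
    hT.eigenvalues hk i * ‖x‖ ^ 2 ≤ re ⟪x, T x⟫_𝕜 := by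
  rw [re_inner_map_self_eq_sum_eigenvalues hT hk,
    ← (hT.eigenvectorBasis hk).sum_sq_norm_inner_right, Finset.mul_sum]
  refine Finset.sum_le_sum fun p _ => ?_
  rcases lt_or_ge i p with hip | hpi
  · simp [hx p hip]
  · gcongr
    exact hT.eigenvalues_antitone hk hpi

lemma re_inner_le_eigenvalues_mul_sq_norm (hT : T.IsSymmetric) (hk : finrank 𝕜 E = k)
    {i : Fin k} {x : E} (hx : ∀ p < i, ⟪hT.eigenvectorBasis hk p, x⟫_𝕜 = 0) :
    re ⟪x, T x⟫_𝕜 ≤ hT.eigenvalues hk i * ‖x‖ ^ 2 := by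
  rw [re_inner_map_self_eq_sum_eigenvalues hT hk,
    ← (hT.eigenvectorBasis hk).sum_sq_norm_inner_right, Finset.mul_sum]
  refine Finset.sum_le_sum fun p _ => ?_
  rcases lt_or_ge p i with hpi | hip
  · simp [hx p hpi]
  · gcongr
    exact hT.eigenvalues_antitone hk hip

-- `hij` reads `k - i ≤ l - j`: positions are counted from the bottom of the two spectra.
lemma exists_ne_zero_inner_eigenvectorBasis_eq_zero (hT : T.IsSymmetric) (hk : finrank 𝕜 E = k)
    (hS : S.IsSymmetric) (hl : finrank 𝕜 F = l) (W : F →ₗ[𝕜] E) {i : Fin k} {j : Fin l}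
    (hij : k + j ≤ l + i) :
    ∃ y ≠ 0, (∀ p, i < p → ⟪hT.eigenvectorBasis hk p, W y⟫_𝕜 = 0) ∧
      ∀ q < j, ⟪hS.eigenvectorBasis hl q, y⟫_𝕜 = 0 := by
  let φ : F →ₗ[𝕜] (Finset.Ioi i ⊕ Finset.Iio j → 𝕜) := LinearMap.pi <| Sum.elim
    (fun p => innerₛₗ 𝕜 (hT.eigenvectorBasis hk p) ∘ₗ W)
    (fun q => innerₛₗ 𝕜 (hS.eigenvectorBasis hl q.1))
  have hφ : finrank 𝕜 (Finset.Ioi i ⊕ Finset.Iio j → 𝕜) < finrank 𝕜 F := by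
    simp only [finrank_fintype_fun_eq_card, Fintype.card_sum, Fintype.card_coe, Fin.card_Ioi,
      Fin.card_Iio, hl]
    omega
  obtain ⟨y, hφy, hy⟩ :=
    (Submodule.ne_bot_iff _).mp (LinearMap.ker_ne_bot_of_finrank_lt (f := φ) hφ)
  exact ⟨y, hy, fun p hp => congrFun hφy (.inl ⟨p, Finset.mem_Ioi.mpr hp⟩),
    fun q hq => congrFun hφy (.inr ⟨q, Finset.mem_Iio.mpr hq⟩)⟩

theorem eigenvalues_le_eigenvalues_of_re_inner_le (hT : T.IsSymmetric) (hk : finrank 𝕜 E = k)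
    (hS : S.IsSymmetric) (hl : finrank 𝕜 F = l) (W : F →ₗ[𝕜] E) {i : Fin k} {j : Fin l}
    (hij : k + j ≤ l + i)
    (h : ∀ y, hT.eigenvalues hk i * ‖W y‖ ^ 2 ≤ re ⟪W y, T (W y)⟫_𝕜 →
      hT.eigenvalues hk i * ‖y‖ ^ 2 ≤ re ⟪y, S y⟫_𝕜) :
    hT.eigenvalues hk i ≤ hS.eigenvalues hl j := by
  obtain ⟨y, hy, hTy, hSy⟩ := exists_ne_zero_inner_eigenvectorBasis_eq_zero hT hk hS hl W hij
  have hlower := h y (eigenvalues_mul_sq_norm_le_re_inner hT hk hTy)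
  have hupper := re_inner_le_eigenvalues_mul_sq_norm hS hl hSy
  exact le_of_mul_le_mul_right (hlower.trans hupper) (by positivity)

end SymmetricOperators

section Douglas

open scoped ComplexOrder InnerProductSpace

variable {𝕜 : Type*} [RCLike 𝕜]

theorem exists_comp_eq_and_norm_apply_le {V E F : Type*} [AddCommGroup V] [Module 𝕜 V]
    [NormedAddCommGroup E] [InnerProductSpace 𝕜 E] [NormedAddCommGroup F] [NormedSpace 𝕜 F]
    {f : V →ₗ[𝕜] F} {g : V →ₗ[𝕜] E} [g.range.HasOrthogonalProjection]
    (h : ∀ x, ‖f x‖ ≤ ‖g x‖) :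
    ∃ W : E →ₗ[𝕜] F, W ∘ₗ g = f ∧ ∀ y, ‖W y‖ ≤ ‖y‖ := by
  obtain ⟨r, hr⟩ := g.rangeRestrict.exists_rightInverse_of_surjective g.range_rangeRestrict
  have hgr (z : g.range) : g (r z) = z := congrArg Subtype.val (LinearMap.congr_fun hr z)
  refine ⟨f ∘ₗ r ∘ₗ g.range.orthogonalProjectionOnto, LinearMap.ext fun x => ?_, fun y => ?_⟩
  · have hproj : g.range.orthogonalProjectionOnto (g x) = g.rangeRestrict x :=
      Submodule.orthogonalProjectionOnto_mem_subspace_eq_self (g.rangeRestrict x)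
    have hdiff : f (r (g.rangeRestrict x) - x) = 0 :=
      norm_le_zero_iff.mp <| (h _).trans_eq <| by simp [hgr]
    simpa [hproj, sub_eq_zero] using hdiff
  · calc ‖f (r (g.range.orthogonalProjectionOnto y))‖
        ≤ ‖g (r (g.range.orthogonalProjectionOnto y))‖ := h _
      _ = ‖g.range.orthogonalProjectionOnto y‖ := by rw [hgr, Submodule.coe_norm]
      _ ≤ ‖y‖ := g.range.norm_orthogonalProjectionOnto_apply_le y

variable {ι κ o : Type*} [Fintype ι] [Fintype κ] [DecidableEq ι]

lemma posSemidef_conjTranspose_mul_self_sub_iff [Fintype o] {A : Matrix κ ι 𝕜}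
    {B : Matrix o ι 𝕜} :
    (Bᴴ * B - Aᴴ * A).PosSemidef ↔
      ∀ x, ‖toEuclideanLin A x‖ ≤ ‖toEuclideanLin B x‖ := by
  classical
  rw [← isPositive_toEuclideanLin_iff, LinearMap.IsPositive, isSymmetric_toEuclideanLin_iff,
    and_iff_right
      ((isHermitian_conjTranspose_mul_self B).sub (isHermitian_conjTranspose_mul_self A))]
  refine forall_congr' fun x => ?_
  rw [map_sub, toLpLin_mul_same, toLpLin_mul_same, toEuclideanLin_conjTranspose_eq_adjoint,
    toEuclideanLin_conjTranspose_eq_adjoint]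
  simp only [LinearMap.sub_apply, LinearMap.comp_apply, inner_sub_left,
    LinearMap.adjoint_inner_left, map_sub, inner_self_eq_norm_sq]
  rw [sub_nonneg, sq_le_sq₀ (norm_nonneg _) (norm_nonneg _)]

lemma posSemidef_one_sub_conjTranspose_mul_self_iff {A : Matrix κ ι 𝕜} :
    (1 - Aᴴ * A).PosSemidef ↔ ∀ x, ‖toEuclideanLin A x‖ ≤ ‖x‖ := by
  simpa only [conjTranspose_one, Matrix.mul_one, toLpLin_one, LinearMap.id_apply] using
    posSemidef_conjTranspose_mul_self_sub_iff (A := A) (B := (1 : Matrix ι ι 𝕜))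

theorem exists_contraction_mul_eq [Finite o] {A : Matrix κ o 𝕜} {B : Matrix ι o 𝕜}
    (h : (Bᴴ * B - Aᴴ * A).PosSemidef) :
    ∃ W : Matrix κ ι 𝕜, W * B = A ∧ (1 - Wᴴ * W).PosSemidef := by
  classical
  cases nonempty_fintype o
  obtain ⟨W, hWB, hW⟩ := exists_comp_eq_and_norm_apply_le
    (posSemidef_conjTranspose_mul_self_sub_iff.mp h)
  obtain ⟨W, rfl⟩ := toEuclideanLin.surjective W
  refine ⟨W, toEuclideanLin.injective ?_,
    posSemidef_one_sub_conjTranspose_mul_self_iff.mpr hW⟩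
  rw [toLpLin_mul_same, hWB]

end Douglas

section ContractiveLift

open scoped ComplexOrder InnerProductSpace

variable {𝕜 ι κ o : Type*} [RCLike 𝕜] [Fintype κ] [DecidableEq ι]

/-- The lift `Wᴴ Θ W + c (1 - Wᴴ W)` of `Θ` along a contraction `W`: it compresses `Θ` along `W`
and fills the defect `1 - Wᴴ W` with the scalar `c`. -/
def contractiveLift (W : Matrix κ ι 𝕜) (c : 𝕜) (Θ : Matrix κ κ 𝕜) : Matrix ι ι 𝕜 :=
  Wᴴ * Θ * W + c • (1 - Wᴴ * W)

lemma isHermitian_contractiveLift (W : Matrix κ ι 𝕜) {c : 𝕜} (hc : IsSelfAdjoint c)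
    {Θ : Matrix κ κ 𝕜} (hΘ : Θ.IsHermitian) : (contractiveLift W c Θ).IsHermitian :=
  (isHermitian_conjTranspose_mul_mul W hΘ).add
    ((isHermitian_one.sub (isHermitian_conjTranspose_mul_self W)).smul hc)

lemma dotProduct_contractiveLift_mulVec [Fintype ι] (W : Matrix κ ι 𝕜) (c : 𝕜) (Θ : Matrix κ κ 𝕜)
    (x : ι → 𝕜) :
    star x ⬝ᵥ contractiveLift W c Θ *ᵥ x =
      star (W *ᵥ x) ⬝ᵥ Θ *ᵥ W *ᵥ x + c * (star x ⬝ᵥ x - star (W *ᵥ x) ⬝ᵥ W *ᵥ x) := by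
  simp [contractiveLift, add_mulVec, smul_mulVec, sub_mulVec, dotProduct_sub, ← mulVec_mulVec,
    dotProduct_mulVec _ Wᴴ, star_mulVec]

lemma inner_toEuclideanLin_contractiveLift [Fintype ι] [DecidableEq κ] (W : Matrix κ ι ℝ) (c : ℝ)
    (Θ : Matrix κ κ ℝ) (y : EuclideanSpace ℝ ι) :
    ⟪y, toEuclideanLin (contractiveLift W c Θ) y⟫_ℝ =
      ⟪toEuclideanLin W y, toEuclideanLin Θ (toEuclideanLin W y)⟫_ℝ +
        c * (‖y‖ ^ 2 - ‖toEuclideanLin W y‖ ^ 2) := by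
  simpa only [← real_inner_self_eq_norm_sq, EuclideanSpace.inner_eq_star_dotProduct,
    ofLp_toLpLin, toLin'_apply, dotProduct_comm] using
    dotProduct_contractiveLift_mulVec W c Θ (WithLp.ofLp y)

lemma mul_contractiveLift_mul_conjTranspose [Fintype ι] {W : Matrix κ ι 𝕜} {F : Matrix o κ 𝕜}
    {G : Matrix o ι 𝕜} (hW : W * Gᴴ = Fᴴ) (c : 𝕜) (Θ : Matrix κ κ 𝕜) :
    G * contractiveLift W c Θ * Gᴴ = F * Θ * Fᴴ + c • (G * Gᴴ - F * Fᴴ) := by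
  have hW' : G * Wᴴ = F := by simpa using congrArg conjTranspose hW
  simp only [contractiveLift, Matrix.mul_add, Matrix.add_mul, Matrix.mul_smul, Matrix.smul_mul,
    Matrix.mul_sub, Matrix.sub_mul, Matrix.mul_one, ← Matrix.mul_assoc, hW']
  simp only [Matrix.mul_assoc, hW]

lemma posDef_contractiveLift [Finite ι] {W : Matrix κ ι 𝕜} (hW : (1 - Wᴴ * W).PosSemidef) {c : 𝕜}
    (hc : 0 < c) {Θ : Matrix κ κ 𝕜} (hΘ : Θ.PosDef) : (contractiveLift W c Θ).PosDef := by
  cases nonempty_fintype ι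
  refine .of_dotProduct_mulVec_pos
    (isHermitian_contractiveLift W (.of_nonneg hc.le) hΘ.isHermitian) fun x hx => ?_
  have hdefect : 0 ≤ star x ⬝ᵥ x - star (W *ᵥ x) ⬝ᵥ W *ᵥ x := by
    simpa [sub_mulVec, dotProduct_sub, ← mulVec_mulVec, dotProduct_mulVec _ Wᴴ, star_mulVec]
      using hW.dotProduct_mulVec_nonneg x
  rw [dotProduct_contractiveLift_mulVec]
  by_cases hWx : W *ᵥ x = 0
  · simpa [hWx] using mul_pos hc (dotProduct_star_self_pos_iff.mpr hx)
  · exact add_pos_of_pos_of_nonneg (hΘ.dotProduct_mulVec_pos hWx) (mul_nonneg hc.le hdefect)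

end ContractiveLift

section SortedEigs

open RCLike
open scoped InnerProductSpace

variable {k l : ℕ}

lemma sortedEigs_pos {M : Matrix (Fin k) (Fin k) ℝ} (hM : M.PosDef) (i : Fin k) :
    0 < sortedEigs M i := by
  rw [sortedEigs, dif_pos hM.isHermitian]
  exact hM.eigenvalues_pos _

lemma sortedEigs_eq_eigenvalues {M : Matrix (Fin k) (Fin k) ℝ} (hM : M.IsHermitian) :
    sortedEigs M =
      (isSymmetric_toEuclideanLin_iff.mpr hM).eigenvalues finrank_euclideanSpace_fin := by
  set ev := (isSymmetric_toEuclideanLin_iff.mpr hM).eigenvalues finrank_euclideanSpace_fin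
  obtain ⟨σ, hσ⟩ : ∃ σ : Equiv.Perm (Fin k), hM.eigenvalues = ev ∘ σ := by
    exact ⟨(Fintype.equivOfCardEq (Fintype.card_fin _)).symm.trans
      (finCongr (Fintype.card_fin k)), funext fun _ => eigenvalues_eq_eigenvalues_cast _ _ _ _⟩
  have hmono : Monotone (ev ∘ Fin.revPerm) :=
    (LinearMap.IsSymmetric.eigenvalues_antitone _ _).comp Fin.rev_anti
  have hcomp : hM.eigenvalues ∘ Tuple.sort hM.eigenvalues =
      ev ∘ (Tuple.sort hM.eigenvalues).trans σ := by
    rw [Equiv.coe_trans, ← Function.comp_assoc, ← hσ]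
  have hsort : hM.eigenvalues ∘ Tuple.sort hM.eigenvalues = ev ∘ Fin.revPerm :=
    hcomp.trans (Tuple.unique_monotone (hcomp ▸ Tuple.monotone_sort _) hmono)
  funext i
  rw [sortedEigs, dif_pos hM, hsort]
  simp

lemma sortedEigs_le_sortedEigs_contractiveLift {Θ : Matrix (Fin k) (Fin k) ℝ}
    (hΘ : Θ.IsHermitian) {W : Matrix (Fin k) (Fin l) ℝ} (hW : (1 - Wᴴ * W).PosSemidef) {c : ℝ}
    {i : Fin k} {j : Fin l} (hij : k + j ≤ l + i) (hc : sortedEigs Θ i ≤ c) :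
    sortedEigs Θ i ≤ sortedEigs (contractiveLift W c Θ) j := by
  have hN := isHermitian_contractiveLift W (.all c) hΘ
  have hWy := posSemidef_one_sub_conjTranspose_mul_self_iff.mp hW
  rw [sortedEigs_eq_eigenvalues hΘ] at hc ⊢
  rw [sortedEigs_eq_eigenvalues hN]
  refine eigenvalues_le_eigenvalues_of_re_inner_le _ _ _ _ (toEuclideanLin W) hij fun y hy => ?_
  rw [re_to_real] at hy ⊢
  rw [inner_toEuclideanLin_contractiveLift]
  have hdefect : 0 ≤ ‖y‖ ^ 2 - ‖toEuclideanLin W y‖ ^ 2 :=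
    sub_nonneg.mpr (pow_le_pow_left₀ (norm_nonneg _) (hWy y) 2)
  linarith [mul_le_mul_of_nonneg_right hc hdefect]

theorem exists_posDef_mul_mul_transpose_eq {n : ℕ} {F : Matrix (Fin n) (Fin k) ℝ}
    {G : Matrix (Fin n) (Fin l) ℝ} (hFG : F * Fᵀ = G * Gᵀ) {Θ : Matrix (Fin k) (Fin k) ℝ}
    (hΘ : Θ.PosDef) :
    ∃ N : Matrix (Fin l) (Fin l) ℝ, N.PosDef ∧ G * N * Gᵀ = F * Θ * Fᵀ ∧
      ∀ (i : Fin k) (j : Fin l), k + j ≤ l + i → sortedEigs Θ i ≤ sortedEigs N j := by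
  simp only [← conjTranspose_eq_transpose_of_trivial] at hFG ⊢
  have hpsd : (Gᴴᴴ * Gᴴ - Fᴴᴴ * Fᴴ).PosSemidef := by
    rw [conjTranspose_conjTranspose, conjTranspose_conjTranspose, hFG, sub_self]
    exact .zero
  obtain ⟨W, hWG, hW⟩ := exists_contraction_mul_eq hpsd
  obtain ⟨c, hc, hΘc⟩ := ((Filter.eventually_gt_atTop (0 : ℝ)).and
    (Filter.eventually_all.mpr fun i => Filter.eventually_ge_atTop (sortedEigs Θ i))).exists
  refine ⟨contractiveLift W c Θ, posDef_contractiveLift hW hc hΘ, ?_, fun i j hij =>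
    sortedEigs_le_sortedEigs_contractiveLift hΘ.isHermitian hW hij (hΘc i)⟩
  rw [mul_contractiveLift_mul_conjTranspose hWG, hFG, sub_self, smul_zero, add_zero]

end SortedEigs

section DFact

variable {n m s : ℕ}

/-- The set of objective values attained by the DFact-feasible tuples for the factor `F`. -/
def dfactValues {k : ℕ} (s : ℕ) (A : Matrix (Fin m) (Fin n) ℝ) (b : Fin m → ℝ)
    (F : Matrix (Fin n) (Fin k) ℝ) : Set ℝ :=
  {z | ∃ (Θ : Matrix (Fin k) (Fin k) ℝ) (υ ν : Fin n → ℝ) (π : Fin m → ℝ) (τ : ℝ),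
    DFactFeasible A F Θ υ ν π τ ∧ z = DFactObj s b Θ ν π τ}

lemma isUpperSet_dfactValues {k : ℕ} (hn : 0 < n) (A : Matrix (Fin m) (Fin n) ℝ) (b : Fin m → ℝ)
    (F : Matrix (Fin n) (Fin k) ℝ) : IsUpperSet (dfactValues s A b F) := by
  rintro _ z hz ⟨Θ, υ, ν, π, τ, ⟨hΘ, hυ, hν, hπ, hdiag⟩, rfl⟩
  set δ : Fin n → ℝ := Pi.single ⟨0, hn⟩ (z - DFactObj s b Θ ν π τ) with hδ
  have hδ0 : 0 ≤ δ := Pi.single_nonneg.mpr (sub_nonneg.mpr hz)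
  refine ⟨Θ, υ + δ, ν + δ, π, τ, ⟨hΘ, fun j => add_nonneg (hυ j) (hδ0 j),
    fun j => add_nonneg (hν j) (hδ0 j), hπ, fun j => ?_⟩, ?_⟩
  · simp only [Pi.add_apply]
    linarith [hdiag j]
  · have hsum : ∑ j, δ j = z - DFactObj s b Θ ν π τ := by simp [hδ]
    simp only [DFactObj, Pi.add_apply, Finset.sum_add_distrib] at hsum ⊢
    linarith

lemma dfactObj_eq_sum_natAdd {t : ℕ} (b : Fin m → ℝ) (Θ : Matrix (Fin (t + s)) (Fin (t + s)) ℝ)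
    (ν : Fin n → ℝ) (π : Fin m → ℝ) (τ : ℝ) :
    DFactObj s b Θ ν π τ = -(∑ p : Fin s, Real.log (sortedEigs Θ (Fin.natAdd t p)))
      + (∑ j, ν j) + (∑ i, π i * b i) + τ * s - s := by
  simp [DFactObj, Fin.sum_univ_add, fun x : Fin t => x.2.not_ge]

lemma dfactObj_le_dfactObj {k l : ℕ} (hsk : s ≤ k) (hsl : s ≤ l) {Θ : Matrix (Fin k) (Fin k) ℝ}
    (hΘ : Θ.PosDef) {N : Matrix (Fin l) (Fin l) ℝ}
    (hle : ∀ (i : Fin k) (j : Fin l), k + j ≤ l + i → sortedEigs Θ i ≤ sortedEigs N j)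
    (b : Fin m → ℝ) (ν : Fin n → ℝ) (π : Fin m → ℝ) (τ : ℝ) :
    DFactObj s b N ν π τ ≤ DFactObj s b Θ ν π τ := by
  obtain ⟨t, rfl⟩ := Nat.exists_eq_add_of_le' hsk
  obtain ⟨u, rfl⟩ := Nat.exists_eq_add_of_le' hsl
  rw [dfactObj_eq_sum_natAdd, dfactObj_eq_sum_natAdd]
  gcongr with p
  · exact sortedEigs_pos hΘ _
  · exact hle _ _ (by simp only [Fin.val_natAdd]; omega)

theorem dfactValues_subset {k l : ℕ} (hn : 0 < n) (hsk : s ≤ k) (hsl : s ≤ l)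
    {F : Matrix (Fin n) (Fin k) ℝ} {G : Matrix (Fin n) (Fin l) ℝ} (hFG : F * Fᵀ = G * Gᵀ)
    (A : Matrix (Fin m) (Fin n) ℝ) (b : Fin m → ℝ) :
    dfactValues s A b F ⊆ dfactValues s A b G := by
  rintro _ ⟨Θ, υ, ν, π, τ, ⟨hΘ, hυ, hν, hπ, hdiag⟩, rfl⟩
  obtain ⟨N, hN, hGN, hle⟩ := exists_posDef_mul_mul_transpose_eq hFG hΘ
  exact isUpperSet_dfactValues hn A b G (dfactObj_le_dfactObj hsk hsl hΘ hle b ν π τ)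
    ⟨N, υ, ν, π, τ, ⟨hN, hυ, hν, hπ, by rwa [hGN]⟩, rfl⟩

theorem dfactValues_eq {k l : ℕ} (hn : 0 < n) (hsk : s ≤ k) (hsl : s ≤ l)
    {F : Matrix (Fin n) (Fin k) ℝ} {G : Matrix (Fin n) (Fin l) ℝ} (hFG : F * Fᵀ = G * Gᵀ)
    (A : Matrix (Fin m) (Fin n) ℝ) (b : Fin m → ℝ) :
    dfactValues s A b F = dfactValues s A b G :=
  (dfactValues_subset hn hsk hsl hFG A b).antisymm
    (dfactValues_subset hn hsl hsk hFG.symm A b)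

end DFact

theorem stmt_2 {n m s k₁ k₂ : ℕ} (hn : 0 < n) (hm : 0 < m) (hs : 0 < s)
    (hsk₁ : s ≤ k₁) (hsk₂ : s ≤ k₂)
    (C : Matrix (Fin n) (Fin n) ℝ) (hC : C.PosSemidef)
    (F₁ : Matrix (Fin n) (Fin k₁) ℝ) (F₂ : Matrix (Fin n) (Fin k₂) ℝ)
    (hC₁ : C = F₁ * F₁ᵀ) (hC₂ : C = F₂ * F₂ᵀ)
    (A : Matrix (Fin m) (Fin n) ℝ) (b : Fin m → ℝ) :
    -- the sets of attained objective values coincide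
    {z : ℝ | ∃ (Θ : Matrix (Fin k₁) (Fin k₁) ℝ) (υ ν : Fin n → ℝ) (π : Fin m → ℝ) (τ : ℝ),
        DFactFeasible A F₁ Θ υ ν π τ ∧ z = DFactObj s b Θ ν π τ} =
      {z : ℝ | ∃ (Θ : Matrix (Fin k₂) (Fin k₂) ℝ) (υ ν : Fin n → ℝ) (π : Fin m → ℝ) (τ : ℝ),
        DFactFeasible A F₂ Θ υ ν π τ ∧ z = DFactObj s b Θ ν π τ} ∧
    -- in particular, the factorization bound is independent of the factorization
    sInf {z : ℝ | ∃ (Θ : Matrix (Fin k₁) (Fin k₁) ℝ) (υ ν : Fin n → ℝ) (π : Fin m → ℝ) (τ : ℝ),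
        DFactFeasible A F₁ Θ υ ν π τ ∧ z = DFactObj s b Θ ν π τ} =
      sInf {z : ℝ | ∃ (Θ : Matrix (Fin k₂) (Fin k₂) ℝ) (υ ν : Fin n → ℝ) (π : Fin m → ℝ) (τ : ℝ),
        DFactFeasible A F₂ Θ υ ν π τ ∧ z = DFactObj s b Θ ν π τ} := by
  have hvalues : dfactValues s A b F₁ = dfactValues s A b F₂ :=
    dfactValues_eq hn hsk₁ hsk₂ (hC₁.symm.trans hC₂) A b
  exact ⟨hvalues, congrArg sInf hvalues⟩
end

section
/- Let F be an n×k real matrix, x̂ ∈ [0,1]ⁿ, and F(x̂) := Fᵀ·Diag(x̂)·F with spectral decomposition F(x̂) = Σ_{ℓ=1}^{k} λ̂_ℓ·û_ℓ·û_ℓᵀ, where λ̂_1 ≥ ⋯ ≥ λ̂_k ≥ 0 and û_1, …, û_k are orthonormal. Let 1 ≤ s ≤ rank(F(x̂)), and let ι̂ be the unique integer with 0 ≤ ι̂ < s such that (ι̂ = 0 or λ̂_{ι̂} > (1/(s−ι̂))·Σ_{ℓ=ι̂+1}^{k} λ̂_ℓ) and (1/(s−ι̂))·Σ_{ℓ=ι̂+1}^{k}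 λ̂_ℓ ≥ λ̂_{ι̂+1}. Assume the strict inequality (1/(s−ι̂))·Σ_{ℓ=ι̂+1}^{k} λ̂_ℓ > λ̂_{ι̂+1}. Then for each j ∈ {1,…,n}, the function t ↦ Γ_s(F(x̂ + t·e_j)) is differentiable at t = 0 with derivative Σ_{ℓ=1}^{ι̂} (F_{j·}·û_ℓ)²/λ̂_ℓ + ((s−ι̂)/Σ_{i=ι̂+1}^{k} λ̂_i)·Σ_{ℓ=ι̂+1}^{k} (F_{j·}·û_ℓ)². -/
open Matrix

/-- `tailSum lam i = Σ_{ℓ=i+1}^{k} λ_ℓ` (0-based: the sum of `lam ℓ` over indices `ℓ ≥ i`). -/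
noncomputable def tailSum {k : ℕ} (lam : Fin k → ℝ) (i : ℕ) : ℝ :=
  ∑ ℓ : Fin k, if i ≤ (ℓ : ℕ) then lam ℓ else 0

/-- The defining property of the index `ι` of Nikolov's Lemma 13 (with 1-based `λ_ι`
encoded as the 0-based entry `lam ⟨ι−1⟩`):
`ι < s`, `λ_ι > (1/(s−ι))·Σ_{ℓ=ι+1}^{k} λ_ℓ ≥ λ_{ι+1}` (convention `λ_0 = +∞`). -/
def iotaSpec (s : ℕ) {k : ℕ} (lam : Fin k → ℝ) (i : ℕ) : Prop :=
  i < s ∧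
  (i = 0 ∨ ∀ h : i - 1 < k, ((s : ℝ) - i)⁻¹ * tailSum lam i < lam ⟨i - 1, h⟩) ∧
  (∀ h : i < k, lam ⟨i, h⟩ ≤ ((s : ℝ) - i)⁻¹ * tailSum lam i)

/-- The index `ι` of Nikolov's Lemma 13 (chosen by choice; it is unique when it exists). -/
noncomputable def iotaOf (s : ℕ) {k : ℕ} (lam : Fin k → ℝ) : ℕ :=
  open Classical in
  if h : ∃ i, iotaSpec s lam i then h.choose else 0

/-- `Γ_s(X) = Σ_{ℓ=1}^{ι} log λ_ℓ(X) + (s−ι)·log((1/(s−ι))·Σ_{ℓ=ι+1}^{k} λ_ℓ(X))`,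
where `ι = ι(X, s)` is the index from Nikolov's Lemma 13. -/
noncomputable def Gamma (s : ℕ) {k : ℕ} (X : Matrix (Fin k) (Fin k) ℝ) : ℝ :=
  (∑ ℓ : Fin k, if (ℓ : ℕ) < iotaOf s (sortedEigs X) then Real.log (sortedEigs X ℓ) else 0) +
    ((s : ℝ) - iotaOf s (sortedEigs X)) *
      Real.log (((s : ℝ) - iotaOf s (sortedEigs X))⁻¹ *
        tailSum (sortedEigs X) (iotaOf s (sortedEigs X)))

/-!
Let `A = U Diag(λ) Uᵀ` and `B = W Diag(μ) Wᵀ` with `U` and `W` orthogonal, and put `C = Wᵀ U`.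
Then `Cᵢⱼ (μᵢ - λⱼ) = (Wᵀ (B - A) U)ᵢⱼ`, and the squares `Cᵢⱼ²` form a doubly stochastic matrix.
By Birkhoff's theorem and the rearrangement inequality this gives the Hoffman–Wielandt inequality,
so the sorted eigenvalues are Lipschitz in the Frobenius norm.
The first-order remainder of a spectral sum `∑ fᵢ(μᵢ)` is the average, with weights `Cᵢⱼ²`, of
scalar Taylor remainders at `λⱼ` (if `λᵢ = λⱼ`) and of bounded quantities carrying the weight
`Cᵢⱼ² = O(‖B - A‖²)` (if `λᵢ ≠ λⱼ`); both contribute `o(‖B - A‖)`, whatever the multiplicities.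

The inequalities defining `ι` are strict at `A`, so they persist nearby, and `Γ` is locally the sum
of `log` over the first `ι` eigenvalues plus a multiple of the logarithm of the sum of the others.
The gap `λ_ι > λ_{ι+1}` makes both sums differentiable.
-/

open Asymptotics Filter Topology
open scoped Matrix.Norms.Frobenius

section OrthogonalMatrices

variable {m n : Type*} [Fintype m] [Fintype n]

theorem frobenius_norm_sq (X : Matrix m n ℝ) : ‖X‖ ^ 2 = ∑ i, ∑ j, X i j ^ 2 := by
  rw [frobenius_norm_def, ← Real.sqrt_eq_rpow, Real.sq_sqrt (by positivity)]
  simp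

theorem abs_apply_le_frobenius_norm (X : Matrix m n ℝ) (i : m) (j : n) : |X i j| ≤ ‖X‖ := by
  refine abs_le_of_sq_le_sq ?_ (norm_nonneg X)
  calc X i j ^ 2 ≤ ∑ j, X i j ^ 2 :=
        Finset.single_le_sum (f := fun j => X i j ^ 2) (fun _ _ => sq_nonneg _) (Finset.mem_univ j)
    _ ≤ ∑ i, ∑ j, X i j ^ 2 :=
        Finset.single_le_sum (f := fun i => ∑ j, X i j ^ 2)
          (fun _ _ => Finset.sum_nonneg fun _ _ => sq_nonneg _) (Finset.mem_univ i)
    _ = ‖X‖ ^ 2 := (frobenius_norm_sq X).symm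

variable [DecidableEq n] {U W C : Matrix n n ℝ}

theorem map_sq_mem_doublyStochastic (hC : C ∈ orthogonalGroup n ℝ) :
    C.map (· ^ 2) ∈ doublyStochastic ℝ n := by
  refine mem_doublyStochastic_iff_sum.mpr ⟨fun i j => sq_nonneg _, fun i => ?_, fun j => ?_⟩
  · simpa [mul_apply, sq] using
      congr_fun₂ ((mem_orthogonalGroup_iff n ℝ).mp hC) i i
  · simpa [mul_apply, sq] using
      congr_fun₂ ((mem_orthogonalGroup_iff' n ℝ).mp hC) j j

theorem transpose_mul_mem_orthogonalGroup (hW : W ∈ orthogonalGroup n ℝ)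
    (hU : U ∈ orthogonalGroup n ℝ) : Wᵀ * U ∈ orthogonalGroup n ℝ :=
  mul_mem (Unitary.star_mem hW) hU

theorem frobenius_norm_transpose_mul_mul (hW : W ∈ orthogonalGroup n ℝ)
    (hU : U ∈ orthogonalGroup n ℝ) (X : Matrix n n ℝ) : ‖Wᵀ * X * U‖ = ‖X‖ := by
  have norm_sq (Y : Matrix n n ℝ) : ‖Y‖ ^ 2 = (Yᵀ * Y).trace := by
    rw [frobenius_norm_sq, Finset.sum_comm]
    simp [trace, mul_apply, sq]
  have hW' : W * Wᵀ = 1 := (mem_orthogonalGroup_iff n ℝ).mp hW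
  have hU' : U * Uᵀ = 1 := (mem_orthogonalGroup_iff n ℝ).mp hU
  rw [← sq_eq_sq₀ (norm_nonneg _) (norm_nonneg _), norm_sq, norm_sq]
  calc ((Wᵀ * X * U)ᵀ * (Wᵀ * X * U)).trace
      = (Uᵀ * (Xᵀ * (W * Wᵀ) * X * U)).trace := by
        simp only [transpose_mul, transpose_transpose, Matrix.mul_assoc]
    _ = (Xᵀ * X).trace := by
        rw [trace_mul_comm, hW', Matrix.mul_one, Matrix.mul_assoc, hU', Matrix.mul_one]

theorem sum_sq_sub_le_of_mem_doublyStochastic {P : Matrix n n ℝ} (hP : P ∈ doublyStochastic ℝ n)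
    {mu lam : n → ℝ} (h : Monovary mu lam) :
    ∑ i, (mu i - lam i) ^ 2 ≤ ∑ i, ∑ j, P i j * (mu i - lam j) ^ 2 := by
  have perm_le (σ : Equiv.Perm n) :
      ∑ i, (mu i - lam i) ^ 2 ≤ ∑ i, (mu i - lam (σ i)) ^ 2 := by
    have hsq : ∑ i, lam (σ i) ^ 2 = ∑ i, lam i ^ 2 := Equiv.sum_comp σ fun i => lam i ^ 2
    have hmul := h.sum_mul_comp_perm_le_sum_mul (σ := σ)
    simp only [sub_sq, Finset.sum_add_distrib, Finset.sum_sub_distrib, mul_assoc,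
      ← Finset.mul_sum, hsq]
    linarith
  obtain ⟨w, hw_nonneg, hw_sum, rfl⟩ := exists_eq_sum_perm_of_mem_doublyStochastic hP
  calc ∑ i, (mu i - lam i) ^ 2 = ∑ σ, w σ * ∑ i, (mu i - lam i) ^ 2 := by
        rw [← Finset.sum_mul, hw_sum, one_mul]
    _ ≤ ∑ σ, w σ * ∑ i, (mu i - lam (σ i)) ^ 2 :=
        Finset.sum_le_sum fun σ _ => mul_le_mul_of_nonneg_left (perm_le σ) (hw_nonneg σ)
    _ = ∑ i, ∑ j, (∑ σ, w σ • σ.permMatrix ℝ) i j * (mu i - lam j) ^ 2 := by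
        simp only [Matrix.sum_apply, Matrix.smul_apply, smul_eq_mul, Finset.sum_mul]
        simp only [Finset.mul_sum, PEquiv.toMatrix_apply, Equiv.toPEquiv_apply]
        rw [Finset.sum_comm]
        refine Finset.sum_congr rfl fun i _ => ?_
        rw [Finset.sum_comm]
        refine Finset.sum_congr rfl fun σ _ => ?_
        simp

end OrthogonalMatrices

/-- `A = U Λ Uᵀ` with `U` orthogonal and `Λ = Diag(lam)`: the columns of `U` are an orthonormal
basis of eigenvectors of `A`, and `lam` lists the corresponding eigenvalues. -/
structure IsOrthogonalDiagonalization {n : Type*} [Fintype n] [DecidableEq n]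
    (A U : Matrix n n ℝ) (lam : n → ℝ) : Prop where
  mem_orthogonalGroup : U ∈ orthogonalGroup n ℝ
  eq_mul_diagonal_mul : A = U * diagonal lam * Uᵀ

namespace IsOrthogonalDiagonalization

variable {n : Type*} [Fintype n] [DecidableEq n] {A B U W : Matrix n n ℝ} {lam mu : n → ℝ}

theorem isHermitian (hA : IsOrthogonalDiagonalization A U lam) : A.IsHermitian := by
  rw [IsHermitian, conjTranspose_eq_transpose_of_trivial, hA.eq_mul_diagonal_mul]
  simp [Matrix.mul_assoc]

theorem mul_eq (hA : IsOrthogonalDiagonalization A U lam) : A * U = U * diagonal lam := by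
  have hU : Uᵀ * U = 1 := (mem_orthogonalGroup_iff' n ℝ).mp hA.mem_orthogonalGroup
  rw [hA.eq_mul_diagonal_mul, Matrix.mul_assoc, hU, Matrix.mul_one]

theorem transpose_mul (hA : IsOrthogonalDiagonalization A U lam) :
    Uᵀ * A = diagonal lam * Uᵀ := by
  have hU : Uᵀ * U = 1 := (mem_orthogonalGroup_iff' n ℝ).mp hA.mem_orthogonalGroup
  rw [hA.eq_mul_diagonal_mul, ← Matrix.mul_assoc, ← Matrix.mul_assoc, hU, Matrix.one_mul]

theorem transpose_mul_sub_mul_apply (hA : IsOrthogonalDiagonalization A U lam)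
    (hB : IsOrthogonalDiagonalization B W mu) (i j : n) :
    (Wᵀ * (B - A) * U) i j = (Wᵀ * U) i j * (mu i - lam j) := by
  have hdiff : Wᵀ * (B - A) * U = diagonal mu * (Wᵀ * U) - Wᵀ * U * diagonal lam := by
    rw [Matrix.mul_sub, Matrix.sub_mul, hB.transpose_mul, Matrix.mul_assoc, Matrix.mul_assoc Wᵀ A,
      hA.mul_eq, Matrix.mul_assoc Wᵀ U]
  rw [hdiff, Matrix.sub_apply, diagonal_mul, mul_diagonal]
  ring

/-- The **Hoffman–Wielandt inequality**. -/
theorem sum_sq_sub_le_norm_sq (hA : IsOrthogonalDiagonalization A U lam)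
    (hB : IsOrthogonalDiagonalization B W mu) (h : Monovary mu lam) :
    ∑ i, (mu i - lam i) ^ 2 ≤ ‖B - A‖ ^ 2 :=
  have hC := transpose_mul_mem_orthogonalGroup hB.mem_orthogonalGroup hA.mem_orthogonalGroup
  calc ∑ i, (mu i - lam i) ^ 2
      ≤ ∑ i, ∑ j, (Wᵀ * U).map (· ^ 2) i j * (mu i - lam j) ^ 2 :=
        sum_sq_sub_le_of_mem_doublyStochastic (map_sq_mem_doublyStochastic hC) h
    _ = ‖Wᵀ * (B - A) * U‖ ^ 2 := by
        simp only [frobenius_norm_sq, transpose_mul_sub_mul_apply hA hB, mul_pow, map_apply]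
    _ = ‖B - A‖ ^ 2 := by
        rw [frobenius_norm_transpose_mul_mul hB.mem_orthogonalGroup hA.mem_orthogonalGroup]

theorem abs_sub_le_norm (hA : IsOrthogonalDiagonalization A U lam)
    (hB : IsOrthogonalDiagonalization B W mu) (h : Monovary mu lam) (i : n) :
    |mu i - lam i| ≤ ‖B - A‖ :=
  abs_le_of_sq_le_sq ((Finset.single_le_sum (f := fun i => (mu i - lam i) ^ 2)
    (fun _ _ => sq_nonneg _) (Finset.mem_univ i)).trans (hA.sum_sq_sub_le_norm_sq hB h))
    (norm_nonneg _)

theorem eigenvalues_unique (hA : IsOrthogonalDiagonalization A U lam)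
    (hA' : IsOrthogonalDiagonalization A W mu) (h : Monovary mu lam) : mu = lam := by
  ext i
  simpa [sub_eq_zero] using hA.abs_sub_le_norm hA' h i

/-- For `b i = f (mu i)`, `a j = f (lam j)` and `g j = f' (lam j)` this writes the first-order
Taylor remainder of a spectral sum as an average of scalar remainders. -/
theorem sum_sub_sum_sub_eq (hA : IsOrthogonalDiagonalization A U lam)
    (hB : IsOrthogonalDiagonalization B W mu) (b a g : n → ℝ) :
    ∑ i, b i - ∑ j, a j - ∑ j, g j * (Uᵀ * (B - A) * U) j j =
      ∑ i, ∑ j, (Wᵀ * U) i j ^ 2 * (b i - a j - g j * (mu i - lam j)) := by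
  have hC := map_sq_mem_doublyStochastic
    (transpose_mul_mem_orthogonalGroup hB.mem_orthogonalGroup hA.mem_orthogonalGroup)
  have hrow : ∑ i, ∑ j, (Wᵀ * U) i j ^ 2 * b i = ∑ i, b i := by
    refine Finset.sum_congr rfl fun i _ => ?_
    rw [← Finset.sum_mul]
    exact (congrArg (· * b i) (sum_row_of_mem_doublyStochastic hC i)).trans (one_mul _)
  have hcol : ∑ i, ∑ j, (Wᵀ * U) i j ^ 2 * a j = ∑ j, a j := by
    rw [Finset.sum_comm]
    refine Finset.sum_congr rfl fun j _ => ?_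
    rw [← Finset.sum_mul]
    exact (congrArg (· * a j) (sum_col_of_mem_doublyStochastic hC j)).trans (one_mul _)
  have hlinear : ∑ i, ∑ j, (Wᵀ * U) i j ^ 2 * (g j * (mu i - lam j)) =
      ∑ j, g j * (Uᵀ * (B - A) * U) j j := by
    have hW : W * Wᵀ = 1 := (mem_orthogonalGroup_iff n ℝ).mp hB.mem_orthogonalGroup
    have hinsert : Uᵀ * (B - A) * U = (Wᵀ * U)ᵀ * (Wᵀ * (B - A) * U) := by
      rw [Matrix.transpose_mul, transpose_transpose, Matrix.mul_assoc Uᵀ W,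
        ← Matrix.mul_assoc W, ← Matrix.mul_assoc W, hW, Matrix.one_mul, Matrix.mul_assoc]
    rw [Finset.sum_comm]
    refine Finset.sum_congr rfl fun j _ => ?_
    rw [hinsert, mul_apply, Finset.mul_sum]
    refine Finset.sum_congr rfl fun i _ => ?_
    rw [transpose_mul_sub_mul_apply hA hB, transpose_apply]
    ring
  simp only [mul_sub, Finset.sum_sub_distrib, hrow, hcol] at hlinear ⊢
  rw [hlinear]

theorem of_sum_vecMulVec {u : n → n → ℝ}
    (hu : ∀ i j, u i ⬝ᵥ u j = if i = j then (1 : ℝ) else 0)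
    (hA : A = ∑ l, lam l • vecMulVec (u l) (u l)) :
    IsOrthogonalDiagonalization A (of u)ᵀ lam where
  mem_orthogonalGroup := by
    rw [mem_orthogonalGroup_iff']
    ext i j
    simpa [mul_apply, dotProduct, one_apply] using hu i j
  eq_mul_diagonal_mul := by
    ext i j
    simp only [hA, Matrix.sum_apply, Matrix.smul_apply, vecMulVec_apply, smul_eq_mul,
      mul_apply (M := _ * _), mul_diagonal, transpose_apply, of_apply]
    exact Finset.sum_congr rfl fun l _ => by ring

end IsOrthogonalDiagonalization

section SortedEigs

variable {k : ℕ} {A B U : Matrix (Fin k) (Fin k) ℝ} {lam : Fin k → ℝ}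

theorem antitone_sortedEigs (A : Matrix (Fin k) (Fin k) ℝ) : Antitone (sortedEigs A) := by
  unfold sortedEigs
  split_ifs with h
  · exact fun i j hij => Tuple.monotone_sort h.eigenvalues (Fin.rev_le_rev.mpr hij)
  · exact antitone_const

theorem exists_isOrthogonalDiagonalization_sortedEigs (hA : A.IsHermitian) :
    ∃ U, IsOrthogonalDiagonalization A U (sortedEigs A) := by
  let σ : Equiv.Perm (Fin k) := Fin.revPerm.trans (Tuple.sort hA.eigenvalues)
  let Q : Matrix (Fin k) (Fin k) ℝ := hA.eigenvectorUnitary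
  have hQ : Q ∈ orthogonalGroup (Fin k) ℝ := hA.eigenvectorUnitary.2
  have hsorted : sortedEigs A = hA.eigenvalues ∘ σ := by
    simp only [sortedEigs, dif_pos hA]
    rfl
  have hspectral : A = Q * diagonal hA.eigenvalues * Qᵀ := hA.spectral_theorem
  refine ⟨Q.submatrix id σ, ?_, ?_⟩
  · rw [mem_orthogonalGroup_iff, transpose_submatrix, submatrix_mul_equiv]
    simpa using (mem_orthogonalGroup_iff (Fin k) ℝ).mp hQ
  · rw [hsorted, transpose_submatrix, ← submatrix_diagonal_equiv, submatrix_mul_equiv,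
      submatrix_mul_equiv, submatrix_id_id]
    exact hspectral

theorem IsOrthogonalDiagonalization.sortedEigs_eq (hA : IsOrthogonalDiagonalization A U lam)
    (hlam : Antitone lam) : sortedEigs A = lam := by
  obtain ⟨W, hW⟩ := exists_isOrthogonalDiagonalization_sortedEigs hA.isHermitian
  exact hA.eigenvalues_unique hW ((antitone_sortedEigs A).monovary hlam)

theorem abs_sortedEigs_sub_le_norm (hA : A.IsHermitian) (hB : B.IsHermitian) (m : Fin k) :
    |sortedEigs B m - sortedEigs A m| ≤ ‖B - A‖ := by
  obtain ⟨U, hU⟩ := exists_isOrthogonalDiagonalization_sortedEigs hA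
  obtain ⟨W, hW⟩ := exists_isOrthogonalDiagonalization_sortedEigs hB
  exact hU.abs_sub_le_norm hW ((antitone_sortedEigs B).monovary (antitone_sortedEigs A)) m

theorem continuousOn_sortedEigs :
    ContinuousOn sortedEigs {A : Matrix (Fin k) (Fin k) ℝ | A.IsHermitian} := by
  refine continuousOn_pi.mpr fun m A hA => tendsto_iff_norm_sub_tendsto_zero.mpr ?_
  have hnorm : Tendsto (fun B => ‖B - A‖) (𝓝[{B | B.IsHermitian}] A) (𝓝 0) :=
    tendsto_iff_norm_sub_tendsto_zero.mp (tendsto_id.mono_left nhdsWithin_le_nhds)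
  refine squeeze_zero' (.of_forall fun _ => norm_nonneg _) ?_ hnorm
  filter_upwards [self_mem_nhdsWithin] with B hB using abs_sortedEigs_sub_le_norm hA hB m

end SortedEigs

section SpectralSums

variable {α : Type*} {l : Filter α} {c x r : α → ℝ} {φ : ℝ → ℝ} {a b g : ℝ}

theorem isLittleO_sq_mul_remainder_of_tendsto (hc : c =O[l] fun _ => (1 : ℝ))
    (hcx : (fun t => c t * (x t - b)) =O[l] r) (hx : Tendsto x l (𝓝 b)) (hφ : HasDerivAt φ g b) :
    (fun t => c t ^ 2 * (φ (x t) - φ b - g * (x t - b))) =o[l] r := by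
  have hrem : (fun t => φ (x t) - φ b - g * (x t - b)) =o[l] fun t => x t - b := by
    simpa [Function.comp_def, mul_comm] using (hasDerivAt_iff_isLittleO.mp hφ).comp_tendsto hx
  have hc_rem := ((isBigO_refl c l).mul_isLittleO hrem).trans_isBigO hcx
  simpa [sq, mul_assoc] using hc.mul_isLittleO hc_rem

theorem isLittleO_sq_mul_of_tendsto_ne {q : α → ℝ} (hcx : (fun t => c t * (x t - b)) =O[l] r)
    (hx : Tendsto x l (𝓝 a)) (hab : a ≠ b) (hr : Tendsto r l (𝓝 0))
    (hq : q =O[l] fun _ => (1 : ℝ)) :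
    (fun t => c t ^ 2 * q t) =o[l] r := by
  have hsub : Tendsto (fun t => x t - b) l (𝓝 (a - b)) := hx.sub_const b
  have hc : c =O[l] r := by
    have hdiv := hcx.mul ((hsub.inv₀ (sub_ne_zero.mpr hab)).isBigO_one ℝ)
    simp only [mul_one] at hdiv
    refine hdiv.congr' ?_ .rfl
    filter_upwards [hsub.eventually_ne (sub_ne_zero.mpr hab)] with t ht
    rw [mul_inv_cancel_right₀ ht]
  have hc_zero : c =o[l] fun _ => (1 : ℝ) := hc.trans_isLittleO ((isLittleO_one_iff ℝ).mpr hr)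
  simpa [sq, mul_assoc] using hc_zero.mul_isBigO (hc.mul hq)

variable {k : ℕ} {M : ℝ → Matrix (Fin k) (Fin k) ℝ} {A M' U : Matrix (Fin k) (Fin k) ℝ}
  {lam : Fin k → ℝ} {t₀ : ℝ} {f : Fin k → ℝ → ℝ} {f' : Fin k → ℝ}

/-- Only the diagonal of the perturbation in an eigenbasis of `A` contributes to first order, and
the eigenbasis may be arbitrary since `f` is constant on eigenspaces. -/
theorem isLittleO_sum_sortedEigs_sub (hU : IsOrthogonalDiagonalization A U lam)
    (hlam : Antitone lam) (hf : ∀ m, HasDerivAt (f m) (f' m) (lam m))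
    (hf_eq : ∀ i j, lam i = lam j → f i = f j) :
    (fun B => ∑ m, f m (sortedEigs B m) - ∑ m, f m (lam m) -
      ∑ m, f' m * (Uᵀ * (B - A) * U) m m) =o[𝓝[{B | B.IsHermitian}] A] fun B => ‖B - A‖ := by
  set l := 𝓝[{B : Matrix (Fin k) (Fin k) ℝ | B.IsHermitian}] A
  have hHermitian : ∀ᶠ B in l, B.IsHermitian := self_mem_nhdsWithin
  choose! W hW using fun (B : Matrix (Fin k) (Fin k) ℝ) (hB : B.IsHermitian) =>
    exists_isOrthogonalDiagonalization_sortedEigs hB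
  have hlim (i : Fin k) : Tendsto (fun B => sortedEigs B i) l (𝓝 (lam i)) := by
    rw [← hU.sortedEigs_eq hlam]
    exact tendsto_pi_nhds.mp (continuousOn_sortedEigs A hU.isHermitian) i
  have hC (i j : Fin k) : (fun B => ((W B)ᵀ * U) i j) =O[l] fun _ => (1 : ℝ) := by
    refine .of_bound 1 (hHermitian.mono fun B hB => ?_)
    simpa using entry_norm_bound_of_unitary (transpose_mul_mem_orthogonalGroup
      (hW B hB).mem_orthogonalGroup hU.mem_orthogonalGroup) i j
  have hC_gap (i j : Fin k) :
      (fun B => ((W B)ᵀ * U) i j * (sortedEigs B i - lam j)) =O[l] fun B => ‖B - A‖ := by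
    refine .of_bound 1 (hHermitian.mono fun B hB => ?_)
    rw [← hU.transpose_mul_sub_mul_apply (hW B hB), one_mul, norm_norm,
      ← frobenius_norm_transpose_mul_mul (hW B hB).mem_orthogonalGroup hU.mem_orthogonalGroup]
    exact abs_apply_le_frobenius_norm _ i j
  have hremainder (i j : Fin k) : (fun B => ((W B)ᵀ * U) i j ^ 2 *
      (f i (sortedEigs B i) - f j (lam j) - f' j * (sortedEigs B i - lam j)))
        =o[l] fun B => ‖B - A‖ := by
    by_cases hij : lam i = lam j
    · rw [hf_eq i j hij]
      exact isLittleO_sq_mul_remainder_of_tendsto (hC i j) (hC_gap i j) (hij ▸ hlim i) (hf j)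
    · refine isLittleO_sq_mul_of_tendsto_ne (hC_gap i j) (hlim i) hij
        (tendsto_iff_norm_sub_tendsto_zero.mp continuousWithinAt_id) ?_
      exact ((((hf i).continuousAt.tendsto.comp (hlim i)).sub_const _).sub
        (((hlim i).sub_const _).const_mul _)).isBigO_one ℝ
  refine (IsLittleO.fun_sum (s := Finset.univ) fun i _ =>
    IsLittleO.fun_sum (s := Finset.univ) fun j _ => hremainder i j).congr' ?_ .rfl
  filter_upwards [hHermitian] with B hB using
    (hU.sum_sub_sum_sub_eq (hW B hB) (fun i => f i (sortedEigs B i)) _ f').symm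

theorem hasDerivAt_sum_sortedEigs (hM : ∀ᶠ t in 𝓝 t₀, (M t).IsHermitian)
    (hM' : HasDerivAt M M' t₀) (hU : IsOrthogonalDiagonalization (M t₀) U lam) (hlam : Antitone lam)
    (hf : ∀ m, HasDerivAt (f m) (f' m) (lam m)) (hf_eq : ∀ i j, lam i = lam j → f i = f j) :
    HasDerivAt (fun t => ∑ m, f m (sortedEigs (M t) m)) (∑ m, f' m * (Uᵀ * M' * U) m m) t₀ := by
  have hlinear : HasDerivAt (fun t => ∑ m, f' m * (Uᵀ * (M t - M t₀) * U) m m)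
      (∑ m, f' m * (Uᵀ * M' * U) m m) t₀ :=
    have hconj := ((hM'.sub_const (M t₀)).const_mul Uᵀ).mul_const U
    .fun_sum fun m _ => (hasDerivAt_pi.mp (hasDerivAt_pi.mp hconj m) m).const_mul (f' m)
  have htendsto : Tendsto M (𝓝 t₀) (𝓝[{B | B.IsHermitian}] (M t₀)) :=
    tendsto_nhdsWithin_iff.mpr ⟨hM'.continuousAt, hM⟩
  have hremainder := ((isLittleO_sum_sortedEigs_sub hU hlam hf hf_eq).comp_tendsto
    htendsto).trans_isBigO hM'.isBigO_sub.norm_left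
  refine hasDerivAt_iff_isLittleO.mpr <|
    (hremainder.add (hasDerivAt_iff_isLittleO.mp hlinear)).congr_left fun t => ?_
  simp [hU.sortedEigs_eq hlam]

theorem hasDerivAt_sum_sortedEigs_finset (hM : ∀ᶠ t in 𝓝 t₀, (M t).IsHermitian)
    (hM' : HasDerivAt M M' t₀) (hU : IsOrthogonalDiagonalization (M t₀) U lam) (hlam : Antitone lam)
    {S : Finset (Fin k)} (hS : ∀ i ∈ S, ∀ j ∉ S, lam i ≠ lam j) {φ : ℝ → ℝ}
    (hφ : ∀ m ∈ S, HasDerivAt φ (f' m) (lam m)) :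
    HasDerivAt (fun t => ∑ m ∈ S, φ (sortedEigs (M t) m))
      (∑ m ∈ S, f' m * (Uᵀ * M' * U) m m) t₀ := by
  have hderiv := hasDerivAt_sum_sortedEigs hM hM' hU hlam
    (f := fun m => if m ∈ S then φ else 0) (f' := fun m => if m ∈ S then f' m else 0)
    (fun m => by
      split_ifs with hm
      exacts [hφ m hm, hasDerivAt_const _ _])
    (fun i j hij => by
      have : i ∈ S ↔ j ∈ S := by grind
      simp only [this])
  simpa [ite_apply, Finset.sum_ite_mem] using hderiv

end SpectralSums

section Iota

variable {k s i : ℕ} {lam : Fin k → ℝ}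

theorem tailSum_succ (lam : Fin k → ℝ) (hi : i < k) :
    tailSum lam i = lam ⟨i, hi⟩ + tailSum lam (i + 1) := by
  have hsplit (l : Fin k) : (if i ≤ (l : ℕ) then lam l else 0) =
      (if l = ⟨i, hi⟩ then lam l else 0) + if i + 1 ≤ (l : ℕ) then lam l else 0 := by
    grind
  simp only [tailSum, hsplit, Finset.sum_add_distrib, Finset.sum_ite_eq', Finset.mem_univ, if_true]

theorem tailSum_le_add (hlam : Antitone lam) (hi : i < k) {i' : ℕ} (hii' : i ≤ i') (hi' : i' ≤ k) :
    tailSum lam i ≤ ((i' : ℝ) - i) * lam ⟨i, hi⟩ + tailSum lam i' := by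
  induction i', hii' using Nat.le_induction with
  | base => simp
  | succ p hip ih =>
    have hle : lam ⟨p, hi'⟩ ≤ lam ⟨i, hi⟩ := hlam (Fin.mk_le_mk.mpr hip)
    have hsucc := tailSum_succ lam hi'
    push_cast
    linarith [ih (by lia)]

namespace iotaSpec

theorem le (hsk : s ≤ k) (hlam : Antitone lam) {i' : ℕ} (h : iotaSpec s lam i)
    (h' : iotaSpec s lam i') : i' ≤ i := by
  by_contra! hlt
  obtain ⟨his, -, hτ⟩ := h
  obtain ⟨hi's, hτ', -⟩ := h'
  have hpos : (0 : ℝ) < s - i := sub_pos.mpr (mod_cast his)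
  have hpos' : (0 : ℝ) < s - i' := sub_pos.mpr (mod_cast hi's)
  have hhead : lam ⟨i, by lia⟩ * (s - i) ≤ tailSum lam i :=
    (le_inv_mul_iff₀' hpos).mp (hτ (by lia))
  have htail : tailSum lam i' < lam ⟨i, by lia⟩ * (s - i') :=
    ((inv_mul_lt_iff₀' hpos').mp (hτ'.resolve_left (by lia) (by lia))).trans_le <|
      mul_le_mul_of_nonneg_right (hlam (Fin.mk_le_mk.mpr (by lia))) hpos'.le
  linarith [tailSum_le_add hlam (i := i) (by lia) hlt.le (by lia)]

theorem iotaOf_eq (hsk : s ≤ k) (hlam : Antitone lam) (h : iotaSpec s lam i) :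
    iotaOf s lam = i := by
  have hex : ∃ i, iotaSpec s lam i := ⟨i, h⟩
  rw [iotaOf, dif_pos hex]
  exact le_antisymm (h.le hsk hlam hex.choose_spec) (hex.choose_spec.le hsk hlam h)

end iotaSpec

/-- The condition `iotaSpec` with its second inequality strict as well, i.e.
`λ_ι > (1/(s−ι))·Σ_{ℓ=ι+1}^{k} λ_ℓ > λ_{ι+1}`. Unlike `iotaSpec`, it is open in `lam`. -/
def strictIotaSpec (s : ℕ) {k : ℕ} (lam : Fin k → ℝ) (i : ℕ) : Prop :=
  i < s ∧
  (i = 0 ∨ ∀ h : i - 1 < k, ((s : ℝ) - i)⁻¹ * tailSum lam i < lam ⟨i - 1, h⟩) ∧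
  (∀ h : i < k, lam ⟨i, h⟩ < ((s : ℝ) - i)⁻¹ * tailSum lam i)

namespace strictIotaSpec

theorem iotaSpec (h : strictIotaSpec s lam i) : iotaSpec s lam i :=
  ⟨h.1, h.2.1, fun hi => (h.2.2 hi).le⟩

theorem lt_apply (h : strictIotaSpec s lam i) (hsk : s ≤ k) (hlam : Antitone lam) {m : Fin k}
    (hm : (m : ℕ) < i) : ((s : ℝ) - i)⁻¹ * tailSum lam i < lam m :=
  have hi : i - 1 < k := by have := h.1; lia
  (h.2.1.resolve_left (by lia) hi).trans_le (hlam (Fin.le_def.mpr (Nat.le_pred_of_lt hm)))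

theorem apply_lt (h : strictIotaSpec s lam i) (hlam : Antitone lam) {m : Fin k}
    (hm : i ≤ (m : ℕ)) : lam m < ((s : ℝ) - i)⁻¹ * tailSum lam i :=
  (hlam (Fin.le_def.mpr hm)).trans_lt (h.2.2 (by lia))

theorem tailSum_pos (h : strictIotaSpec s lam i) (hsk : s ≤ k) (hlam : Antitone lam) :
    0 < tailSum lam i := by
  obtain ⟨his, -, hτ⟩ := h
  have hik : i < k := by lia
  have hpos : (0 : ℝ) < s - i := sub_pos.mpr (mod_cast his)
  have hsk' : (s : ℝ) ≤ k := mod_cast hsk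
  have hhead : lam ⟨i, hik⟩ * (s - i) < tailSum lam i := (lt_inv_mul_iff₀' hpos).mp (hτ hik)
  have hempty : tailSum lam k = 0 := Finset.sum_eq_zero fun l _ => if_neg l.is_lt.not_ge
  have htail : tailSum lam i ≤ (k - i) * lam ⟨i, hik⟩ := by
    simpa [hempty] using tailSum_le_add hlam hik hik.le le_rfl
  have hnonneg : 0 ≤ lam ⟨i, hik⟩ := by
    by_contra! hneg
    nlinarith
  exact (mul_nonneg hnonneg hpos.le).trans_lt hhead

theorem eventually {α : Type*} {f : Filter α} {mu : α → Fin k → ℝ}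
    (h : strictIotaSpec s lam i) (hmu : Tendsto mu f (𝓝 lam)) :
    ∀ᶠ t in f, strictIotaSpec s (mu t) i := by
  have happly (m : Fin k) : Tendsto (fun t => mu t m) f (𝓝 (lam m)) := tendsto_pi_nhds.mp hmu m
  have hτ : Tendsto (fun t => ((s : ℝ) - i)⁻¹ * tailSum (mu t) i) f
      (𝓝 (((s : ℝ) - i)⁻¹ * tailSum lam i)) := by
    refine (tendsto_finsetSum _ fun m _ => ?_).const_mul _
    split_ifs
    exacts [happly m, tendsto_const_nhds]
  obtain ⟨his, htop, hbot⟩ := h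
  refine eventually_and.mpr ⟨.of_forall fun _ => his, eventually_and.mpr ⟨?_, ?_⟩⟩
  · exact htop.elim (fun h => .of_forall fun _ => .inl h) fun htop =>
      (eventually_all.mpr fun hi => hτ.eventually_lt (happly _) (htop hi)).mono fun _ => .inr
  · exact eventually_all.mpr fun hi => (happly _).eventually_lt hτ (hbot hi)

end strictIotaSpec

end Iota

section Gamma

variable {k s ι : ℕ}

theorem Gamma_eq_of_iotaOf_eq {A : Matrix (Fin k) (Fin k) ℝ} (h : iotaOf s (sortedEigs A) = ι) :
    Gamma s A = ∑ m ∈ {m : Fin k | (m : ℕ) < ι}, Real.log (sortedEigs A m) +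
      ((s : ℝ) - ι) * Real.log (((s : ℝ) - ι)⁻¹ *
        ∑ m ∈ {m : Fin k | ι ≤ (m : ℕ)}, sortedEigs A m) := by
  simp only [Gamma, h, tailSum, Finset.sum_filter]

theorem hasDerivAt_Gamma {M : ℝ → Matrix (Fin k) (Fin k) ℝ} {M' U : Matrix (Fin k) (Fin k) ℝ}
    {lam : Fin k → ℝ} {t₀ : ℝ} (hM : ∀ᶠ t in 𝓝 t₀, (M t).IsHermitian)
    (hM' : HasDerivAt M M' t₀) (hU : IsOrthogonalDiagonalization (M t₀) U lam)
    (hlam : Antitone lam) (hsk : s ≤ k) (hι : strictIotaSpec s lam ι) :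
    HasDerivAt (fun t => Gamma s (M t))
      (∑ m ∈ {m : Fin k | (m : ℕ) < ι}, (Uᵀ * M' * U) m m / lam m +
        ((s : ℝ) - ι) / tailSum lam ι * ∑ m ∈ {m : Fin k | ι ≤ (m : ℕ)}, (Uᵀ * M' * U) m m) t₀ := by
  have hpos : (0 : ℝ) < s - ι := sub_pos.mpr (mod_cast hι.1)
  have htail_pos := hι.tailSum_pos hsk hlam
  have heigs : Tendsto (fun t => sortedEigs (M t)) (𝓝 t₀) (𝓝 lam) := by
    rw [← hU.sortedEigs_eq hlam]
    exact (continuousOn_sortedEigs (M t₀) hU.isHermitian).tendsto.comp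
      (tendsto_nhdsWithin_iff.mpr ⟨hM'.continuousAt, hM⟩)
  have hgap {p q : Fin k} (hp : (p : ℕ) < ι) (hq : ι ≤ (q : ℕ)) : lam q < lam p :=
    (hι.apply_lt hlam hq).trans (hι.lt_apply hsk hlam hp)
  have hlog : HasDerivAt (fun t => ∑ m ∈ {m : Fin k | (m : ℕ) < ι}, Real.log (sortedEigs (M t) m))
      (∑ m ∈ {m : Fin k | (m : ℕ) < ι}, (lam m)⁻¹ * (Uᵀ * M' * U) m m) t₀ := by
    refine hasDerivAt_sum_sortedEigs_finset hM hM' hU hlam (fun p hp q hq => ?_) fun m hm => ?_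
    · exact (hgap (by simpa using hp) (by simpa using hq)).ne'
    · refine Real.hasDerivAt_log (lt_trans ?_ (hι.lt_apply hsk hlam (by simpa using hm))).ne'
      positivity
  have htail : HasDerivAt (fun t => ∑ m ∈ {m : Fin k | ι ≤ (m : ℕ)}, sortedEigs (M t) m)
      (∑ m ∈ {m : Fin k | ι ≤ (m : ℕ)}, 1 * (Uᵀ * M' * U) m m) t₀ := by
    refine hasDerivAt_sum_sortedEigs_finset hM hM' hU hlam (φ := id) (fun p hp q hq => ?_)
      fun m _ => hasDerivAt_id _
    exact (hgap (by simpa using hq) (by simpa using hp)).ne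
  have htail_eq : ∑ m ∈ {m : Fin k | ι ≤ (m : ℕ)}, sortedEigs (M t₀) m = tailSum lam ι := by
    rw [hU.sortedEigs_eq hlam, tailSum, Finset.sum_filter]
  have hderiv := hlog.add (((htail.const_mul ((s : ℝ) - ι)⁻¹).log
    (by rw [htail_eq]; positivity)).const_mul ((s : ℝ) - ι))
  refine (hderiv.congr_deriv ?_).congr_of_eventuallyEq ?_
  · simp only [htail_eq, one_mul, inv_mul_eq_div]
    field_simp
  · filter_upwards [hι.eventually heigs] with t ht
    exact Gamma_eq_of_iotaOf_eq (ht.iotaSpec.iotaOf_eq hsk (antitone_sortedEigs _))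

end Gamma

section WeightedGram

variable {m n : Type*} [Fintype m] [DecidableEq m]

theorem isHermitian_transpose_mul_diagonal_mul (F : Matrix m n ℝ) (x : m → ℝ) :
    (Fᵀ * diagonal x * F).IsHermitian := by
  simpa using isHermitian_conjTranspose_mul_mul F (isHermitian_diagonal x)

theorem transpose_mul_diagonal_add_smul_single_mul (F : Matrix m n ℝ) (x : m → ℝ) (t : ℝ) (j : m) :
    Fᵀ * diagonal (x + t • Pi.single j 1) * F =
      Fᵀ * diagonal x * F + t • vecMulVec (F j) (F j) := by
  ext a b
  simp only [mul_apply (M := _ * _), mul_diagonal, transpose_apply, Pi.add_apply, Pi.smul_apply,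
    smul_eq_mul, Matrix.add_apply, Matrix.smul_apply, vecMulVec_apply, mul_add, add_mul,
    Finset.sum_add_distrib, Pi.single_apply, mul_ite, mul_one, mul_zero, ite_mul, zero_mul,
    Finset.sum_ite_eq', Finset.mem_univ, if_true]
  ring

theorem hasDerivAt_transpose_mul_diagonal_add_smul_single_mul [Finite n] (F : Matrix m n ℝ)
    (x : m → ℝ) (j : m) (t : ℝ) :
    HasDerivAt (fun t : ℝ => Fᵀ * diagonal (x + t • Pi.single j 1) * F)
      (vecMulVec (F j) (F j)) t := by
  have := Fintype.ofFinite n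
  simp only [transpose_mul_diagonal_add_smul_single_mul]
  exact (((hasDerivAt_id t).smul_const (vecMulVec (F j) (F j))).const_add
    (Fᵀ * diagonal x * F)).congr_deriv (one_smul ℝ _)

theorem transpose_mul_vecMulVec_self_mul_apply_self [Fintype n] (U : Matrix n n ℝ) (v : n → ℝ)
    (l : n) : (Uᵀ * vecMulVec v v * U) l l = (v ⬝ᵥ U.col l) ^ 2 := by
  rw [mul_vecMulVec, vecMulVec_mul, vecMulVec_apply, sq]
  exact congrArg (· * _) (dotProduct_comm _ _)

end WeightedGram

theorem stmt_16_general {m : Type*} [Fintype m] [DecidableEq m] {k s : ℕ}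
    (F : Matrix m (Fin k) ℝ) (x : m → ℝ) (lam : Fin k → ℝ) (u : Fin k → Fin k → ℝ)
    (hlam_mono : Antitone lam)
    (horth : ∀ i j, dotProduct (u i) (u j) = if i = j then (1 : ℝ) else 0)
    (hdecomp : Fᵀ * diagonal x * F = ∑ l, lam l • vecMulVec (u l) (u l))
    (hsk : s ≤ k) (ι : ℕ) (hι : strictIotaSpec s lam ι) (j : m) :
    HasDerivAt (fun t : ℝ => Gamma s (Fᵀ * diagonal (x + t • Pi.single j 1) * F))
      ((∑ l : Fin k, if (l : ℕ) < ι then (F j ⬝ᵥ u l) ^ 2 / lam l else 0) +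
        ((s : ℝ) - ι) / tailSum lam ι *
          ∑ l : Fin k, if ι ≤ (l : ℕ) then (F j ⬝ᵥ u l) ^ 2 else 0) 0 := by
  have hU : IsOrthogonalDiagonalization
      (Fᵀ * diagonal (x + (0 : ℝ) • Pi.single j 1) * F) (of u)ᵀ lam := by
    rw [zero_smul, add_zero]
    exact .of_sum_vecMulVec horth hdecomp
  have hderiv := hasDerivAt_Gamma
    (.of_forall fun t : ℝ => isHermitian_transpose_mul_diagonal_mul F (x + t • Pi.single j 1))
    (hasDerivAt_transpose_mul_diagonal_add_smul_single_mul F x j 0) hU hlam_mono hsk hι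
  simpa only [transpose_mul_vecMulVec_self_mul_apply_self, Finset.sum_filter,
    col_transpose, of_row] using hderiv

theorem stmt_16 {n k s : ℕ} (F : Matrix (Fin n) (Fin k) ℝ)
    (x : Fin n → ℝ) (hx : ∀ i, 0 ≤ x i ∧ x i ≤ 1)
    -- a spectral decomposition F(x̂) = Σ_ℓ λ̂_ℓ·û_ℓ·û_ℓᵀ with λ̂_1 ≥ ⋯ ≥ λ̂_k ≥ 0, û orthonormal
    (lam : Fin k → ℝ) (u : Fin k → Fin k → ℝ)
    (hlam_mono : Antitone lam) (hlam_nonneg : ∀ ℓ, 0 ≤ lam ℓ)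
    (horth : ∀ i j, dotProduct (u i) (u j) = if i = j then (1 : ℝ) else 0)
    (hdecomp : Fᵀ * Matrix.diagonal x * F = ∑ ℓ : Fin k, lam ℓ • Matrix.vecMulVec (u ℓ) (u ℓ))
    (hs : 1 ≤ s) (hrank : s ≤ (Fᵀ * Matrix.diagonal x * F).rank) (hsk : s ≤ k)
    -- ι̂ is the index of Nikolov's Lemma 13 for λ̂ …
    (ι : ℕ) (hι : ι < s)
    (hι1 : ι = 0 ∨
      ((s : ℝ) - ι)⁻¹ * (∑ ℓ : Fin k, if ι ≤ (ℓ : ℕ) then lam ℓ else 0) < lam ⟨ι - 1, by omega⟩)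
    -- … and the strict inequality (1/(s−ι̂))·Σ_{ℓ=ι̂+1}^{k} λ̂_ℓ > λ̂_{ι̂+1} holds
    (hι2 : lam ⟨ι, by omega⟩ < ((s : ℝ) - ι)⁻¹ * (∑ ℓ : Fin k, if ι ≤ (ℓ : ℕ) then lam ℓ else 0))
    (j : Fin n) :
    HasDerivAt
      (fun t : ℝ => Gamma s (Fᵀ * Matrix.diagonal (x + t • (Pi.single j 1 : Fin n → ℝ)) * F))
      ((∑ ℓ : Fin k, if (ℓ : ℕ) < ι then dotProduct (F j) (u ℓ) ^ 2 / lam ℓ else 0) +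
        ((s : ℝ) - ι) / (∑ ℓ : Fin k, if ι ≤ (ℓ : ℕ) then lam ℓ else 0) *
          (∑ ℓ : Fin k, if ι ≤ (ℓ : ℕ) then dotProduct (F j) (u ℓ) ^ 2 else 0)) 0 := by
  exact stmt_16_general F x lam u hlam_mono horth hdecomp hsk ι
    ⟨hι, hι1.imp_right fun h _ => h, fun _ => hι2⟩ j
end
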